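/- If g is a 2-step nilpotent symplectic Lie algebra over K (K = ℝ or ℂ) with characteristic sequence (2,…,2,1,…,1) containing exactly k twos, and g is indecomposable, then dim g ≤ k(k+5)/2. -/

import Mathlib

/-- A symplectic form on a Lie algebra `g` over `K`: a `K`-bilinear form which is
alternating, nondegenerate and closed, i.e.
`θ ⁅X,Y⁆ Z + θ ⁅Y,Z⁆ X + θ ⁅Z,X⁆ Y = 0` for all `X Y Z`. -/
def IsSymplecticForm (K : Type*) [RCLike K] (g : Type*) [LieRing g] [LieAlgebra K g]
    (θ : g → g → K) : Prop :=
  (∀ (a : K) (X Y Z : g), θ (a • X + Y) Z = a * θ X Z + θ Y Z) ∧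
  (∀ (a : K) (X Y Z : g), θ X (a • Y + Z) = a * θ X Y + θ X Z) ∧
  (∀ X : g, θ X X = 0) ∧
  (∀ X : g, (∀ Y : g, θ X Y = 0) → X = 0) ∧
  (∀ X Y Z : g, θ ⁅X, Y⁆ Z + θ ⁅Y, Z⁆ X + θ ⁅Z, X⁆ Y = 0)
/-- A Lie algebra is 2-step nilpotent if `[[g,g],g] = 0` and `[g,g] ≠ 0`. -/
def IsTwoStepNilpotent (g : Type*) [LieRing g] : Prop :=
  (∀ X Y Z : g, ⁅⁅X, Y⁆, Z⁆ = 0) ∧ ∃ X Y : g, ⁅X, Y⁆ ≠ 0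
/-- A 2-step nilpotent Lie algebra has characteristic sequence `(2,…,2,1,…,1)` with exactly
`k` twos iff the maximum of `rank (ad X) = dim ⁅X, g⁆` over `X ∈ g \ [g,g]` equals `k`. -/
def HasCharSeqTwos (K : Type*) [RCLike K] (g : Type*) [LieRing g] [LieAlgebra K g]
    (k : ℕ) : Prop :=
  (∀ X : g, X ∉ LieAlgebra.derivedSeries K g 1 →
      Module.finrank K ↥(LinearMap.range (LieAlgebra.ad K g X)) ≤ k) ∧
  ∃ X : g, X ∉ LieAlgebra.derivedSeries K g 1 ∧
      Module.finrank K ↥(LinearMap.range (LieAlgebra.ad K g X)) = k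

/-!
Choose `X` with `r = rank (ad X)` maximal and `ω(⁅Y, X⁆, X) ≠ 0` for some `Y`; such `X` exist
because otherwise `ω(⁅X, Y⁆, Z)` would be totally skew and closedness would give
`3 ω(⁅X, Y⁆, Z) = 0`. Let `A` be the image of `ad X`, `P = A^⊥` and `F = ker (ad X) ∩ P`, so that
`dim g ≤ 2r + dim F`. View `W ↦ ω(⁅W, ·⁆, ·)` as a linear family of bilinear forms; by closedness
the skew part of the form at `W` is `ω(⁅·, ·⁆, W)`. Let `x` and `q` be the maximal ranks of the
maps `W ↦ ω(⁅W, Y⁆, ·)` on `F` and `W ↦ ω(⁅Y, ·⁆, W)` on `P`, over all `Y`.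

For generic `Y` both ranks are attained. The second slices annihilate the preimage of `A` under
`ad Y`, whence `q ≤ rank (ad Y) - dim (im (ad Y) ∩ A)`. By maximality of `r`, `⁅Y, F⁆` lies in `A`,
and it is `ω`-orthogonal to `X`, while `⁅Y, X⁆ ∈ A` is not; hence `x < dim (im (ad Y) ∩ A)`.
Together, `x + q < r`.

The slice ranks also bound the dimension of a family, by splitting off the kernels of successive
slices at points in general position: with `D = [g, g] ⊇ center`, one obtains
`2 dim F ≤ 2 dim D + x(x + 1) + 2xq` and, for the alternating family on `P`,
`2 (dim g - r) ≤ 2 (dim g - dim D) + q(q + 1)`. Adding up,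
`2 dim g ≤ 6r + (x + q)(x + q + 1) ≤ r(r + 5)`.
-/

open Module Filter

section LineOpen

variable {K V : Type*} [Field K] [AddCommGroup V] [Module K V]

/-- A weak form of Zariski openness, sufficient for choosing points in general position over an
infinite field: on every line through one of its points, the set misses only finitely many
points. -/
def IsLineOpen (K : Type*) {V : Type*} [Field K] [AddCommGroup V] [Module K V] (s : Set V) :
    Prop :=
  ∀ y ∈ s, ∀ z : V, ∀ᶠ t : K in cofinite, y + t • z ∈ s

theorem IsLineOpen.inter {s s' : Set V} (hs : IsLineOpen K s) (hs' : IsLineOpen K s') :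
    IsLineOpen K (s ∩ s') :=
  fun y hy z => (hs y hy.1 z).and (hs' y hy.2 z)

theorem IsLineOpen.inter_nonempty [Infinite K] {s s' : Set V} (hs : IsLineOpen K s)
    (hs' : IsLineOpen K s') (h : s.Nonempty) (h' : s'.Nonempty) : (s ∩ s').Nonempty := by
  obtain ⟨y, hy⟩ := h
  obtain ⟨y', hy'⟩ := h'
  have hreverse : Tendsto (fun t : K => 1 - t) cofinite cofinite :=
    sub_right_injective.tendsto_cofinite
  obtain ⟨t, ht, ht'⟩ :=
    ((hs y hy (y' - y)).and (hreverse.eventually (hs' y' hy' (y - y')))).exists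
  refine ⟨y + t • (y' - y), ht, ?_⟩
  convert ht' using 1
  module

theorem eventually_polynomial_eval_ne_zero {p : Polynomial K} (hp : p ≠ 0) :
    ∀ᶠ t in cofinite, p.eval t ≠ 0 :=
  (Polynomial.finite_setOfPred_isRoot hp).compl_mem_cofinite

theorem isLineOpen_apply_self_ne_zero (b : LinearMap.BilinForm K V) :
    IsLineOpen K {y | b y y ≠ 0} := by
  intro y hy z
  let p : Polynomial K := .C (b y y) + .C (b y z + b z y) * .X + .C (b z z) * .X ^ 2
  have hp : p ≠ 0 := fun h => hy (by simpa [p] using congrArg (Polynomial.eval 0) h)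
  filter_upwards [eventually_polynomial_eval_ne_zero hp] with t ht
  convert ht using 1
  simp only [map_add, map_smul, LinearMap.add_apply, LinearMap.smul_apply, smul_eq_mul, p,
    Polynomial.eval_add, Polynomial.eval_mul, Polynomial.eval_pow, Polynomial.eval_C,
    Polynomial.eval_X]
  ring

theorem isLineOpen_apply_ne_zero (φ : Dual K V) : IsLineOpen K {y | φ y ≠ 0} := by
  simpa using isLineOpen_apply_self_ne_zero ((LinearMap.mul K K).compl₁₂ φ φ)

end LineOpen

section Rank

variable {K V W E : Type*} [Field K] [AddCommGroup V] [Module K V]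
  [AddCommGroup W] [Module K W] [AddCommGroup E] [Module K E]

theorem finrank_eq_finrank_map_add_finrank_inf_ker [FiniteDimensional K W] (F : Submodule K W)
    (f : W →ₗ[K] E) :
    finrank K F = finrank K (F.map f) + finrank K ↥(F ⊓ LinearMap.ker f) := by
  have hker : LinearMap.ker (f.domRestrict F) = (F ⊓ LinearMap.ker f).comap F.subtype := by
    ext
    simp
  rw [← LinearMap.finrank_range_add_finrank_ker (f.domRestrict F), LinearMap.range_domRestrict,
    hker, (Submodule.comapSubtypeEquivOfLe inf_le_left).finrank_eq]

theorem eventually_linearIndependent_add_smul {ι : Type*} [Finite ι] {v : ι → E}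
    (hv : LinearIndependent K v) (w : ι → E) :
    ∀ᶠ t : K in cofinite, LinearIndependent K (v + t • w) := by
  classical
  have := Fintype.ofFinite ι
  obtain ⟨g, hg⟩ := (Fintype.linearCombination K v).exists_leftInverse_of_injective
    (LinearMap.ker_eq_bot.2 hv.fintypeLinearCombination_injective)
  have hgv (i : ι) : g (v i) = Pi.single i 1 := by
    simpa using LinearMap.congr_fun hg (Pi.single i 1)
  let B : Matrix ι ι K := .of fun i => g (w i)
  let p : Polynomial K := (1 + (Polynomial.X : Polynomial K) • B.map Polynomial.C).det
  have hp : p ≠ 0 := fun h => by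
    simpa [p, eval_det_add_X_smul] using congrArg (Polynomial.eval 0) h
  filter_upwards [eventually_polynomial_eval_ne_zero hp] with t ht
  have hpt : p.eval t = (1 + t • B).det := by
    rw [← Polynomial.coe_evalRingHom, RingHom.map_det]
    congr 1
    ext i j
    by_cases hij : i = j <;> simp [hij, mul_comm t]
  rw [hpt] at ht
  refine .of_comp g ?_
  have hrows : g ∘ (v + t • w) = fun i => (1 + t • B) i := by
    ext i j
    simp [B, hgv, Matrix.one_apply, Pi.single_apply, eq_comm]
  rw [hrows]
  exact Matrix.linearIndependent_rows_of_det_ne_zero ht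

theorem eventually_le_finrank_map_add_smul [FiniteDimensional K W] {F : Submodule K W}
    {f : W →ₗ[K] E} {r : ℕ} (hr : r ≤ finrank K (F.map f)) (g : W →ₗ[K] E) :
    ∀ᶠ t : K in cofinite, r ≤ finrank K (F.map (f + t • g)) := by
  obtain ⟨v, hv⟩ := exists_linearIndependent_of_le_finrank hr
  choose e heF hev using fun i => (v i).2
  have hfe : LinearIndependent K (f ∘ e) := by
    rw [show f ∘ e = (F.map f).subtype ∘ v from funext hev]
    exact hv.map' _ (Submodule.ker_subtype _)
  filter_upwards [eventually_linearIndependent_add_smul hfe (g ∘ e)] with t ht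
  have hmem (i : Fin r) : (f ∘ e + t • g ∘ e) i ∈ F.map (f + t • g) := ⟨e i, heF i, rfl⟩
  have hindep : LinearIndependent K fun i => (⟨_, hmem i⟩ : F.map (f + t • g)) :=
    .of_comp (F.map (f + t • g)).subtype ht
  simpa using hindep.fintype_card_le_finrank

theorem isLineOpen_le_finrank_map [FiniteDimensional K W] (M : V →ₗ[K] W →ₗ[K] E)
    (F : Submodule K W) (r : ℕ) : IsLineOpen K {y | r ≤ finrank K (F.map (M y))} := by
  intro y hy z
  filter_upwards [eventually_le_finrank_map_add_smul hy (M z)] with t ht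
  rwa [← map_smul, ← map_add] at ht

theorem exists_forall_finrank_map_le [FiniteDimensional K W] (M : V →ₗ[K] W →ₗ[K] E)
    (F : Submodule K W) : ∃ y₀, ∀ y, finrank K (F.map (M y)) ≤ finrank K (F.map (M y₀)) := by
  let rank (y : V) : ℕ := finrank K (F.map (M y))
  have hbdd : BddAbove (Set.range rank) :=
    ⟨finrank K F, Set.forall_mem_range.2 fun y => F.finrank_map_le (M y)⟩
  obtain ⟨y₀, hy₀⟩ := Nat.sSup_mem (Set.range_nonempty rank) hbdd
  exact ⟨y₀, fun y => (le_csSup hbdd (Set.mem_range_self y)).trans_eq hy₀.symm⟩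

theorem exists_forall_finrank_map_le_and_apply_self_ne_zero [Infinite K] [FiniteDimensional K W]
    (M : V →ₗ[K] W →ₗ[K] E) (F : Submodule K W) {b : LinearMap.BilinForm K V} (hb : ¬b.IsAlt) :
    ∃ y₀, (∀ y, finrank K (F.map (M y)) ≤ finrank K (F.map (M y₀))) ∧ b y₀ y₀ ≠ 0 := by
  obtain ⟨y₁, hy₁⟩ := not_forall.1 hb
  obtain ⟨y₂, hy₂⟩ := exists_forall_finrank_map_le M F
  obtain ⟨y₀, hrank, hy₀⟩ := (isLineOpen_le_finrank_map M F _).inter_nonempty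
    (isLineOpen_apply_self_ne_zero b) ⟨y₂, hy₂ y₂⟩ ⟨y₁, hy₁⟩
  exact ⟨y₀, fun y => (hy₂ y).trans hrank, hy₀⟩

theorem apply_mem_map_of_forall_finrank_map_le [Infinite K] [FiniteDimensional K W]
    {M : V →ₗ[K] W →ₗ[K] E} {F : Submodule K W} {y₀ : V}
    (hmax : ∀ y, finrank K (F.map (M y)) ≤ finrank K (F.map (M y₀)))
    {w : W} (hw : w ∈ F) (hw₀ : M y₀ w = 0) (y : V) : M y w ∈ F.map (M y₀) := by
  by_contra hnot
  -- For `t ≠ 0`, the image of `M (y₀ + t • y)` contains `M y w`, since `M y₀ w = 0`.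
  let f : W × K →ₗ[K] E := (M y₀).coprod (.toSpanSingleton K E (M y w))
  let g : W × K →ₗ[K] E := (M y).coprod 0
  have hf : finrank K (F.map (M y₀)) + 1 ≤ finrank K ((F.prod ⊤).map f) := by
    rw [LinearMap.map_coprod_prod, Submodule.map_top, LinearMap.range_toSpanSingleton]
    exact Submodule.finrank_lt_finrank_of_lt (left_lt_sup.2 (by simpa using hnot))
  obtain ⟨t, ht, ht₀⟩ :=
    ((eventually_le_finrank_map_add_smul hf g).and (eventually_cofinite_ne 0)).exists
  have hle : (F.prod ⊤).map (f + t • g) ≤ F.map (M (y₀ + t • y)) := by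
    rintro _ ⟨⟨u, s⟩, ⟨hu, -⟩, rfl⟩
    refine ⟨u + (s * t⁻¹) • w, F.add_mem hu (F.smul_mem _ hw), ?_⟩
    simp only [map_add, map_smul, LinearMap.add_apply, LinearMap.smul_apply,
      LinearMap.coprod_apply, LinearMap.toSpanSingleton_apply, LinearMap.zero_apply, add_zero,
      smul_add, smul_zero, smul_smul, hw₀, inv_mul_cancel_right₀ ht₀, f, g]
    abel
  have := (ht.trans (Submodule.finrank_mono hle)).trans (hmax _)
  lia

end Rank

section FamiliesOfBilinForms

open LinearMap (BilinForm)

variable {K V W : Type*} [Field K] [AddCommGroup V] [Module K V] [AddCommGroup W] [Module K W]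

/-- Skew-symmetrization `(y, u) ↦ b(u, y) - b(y, u)` of a bilinear form `b`, without the
normalizing factor `1/2`. The sign is chosen so that adding it turns `b(u, ·)` into `b(·, u)`. -/
def skewPart : BilinForm K V →ₗ[K] BilinForm K V where
  toFun b := b.flip - b
  map_add' b b' := by
    ext
    simp only [map_add, LinearMap.sub_apply, LinearMap.add_apply, BilinForm.flip_apply]
    abel
  map_smul' c b := by
    ext
    simp [mul_sub]

theorem skewPart_apply_apply (b : BilinForm K V) (y u : V) : skewPart b y u = b u y - b y u :=
  rfl

theorem skewPart_isAlt (b : BilinForm K V) : (skewPart b).IsAlt :=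
  fun y => sub_self (b y y)

/-- For a linear family `B` of bilinear forms, the linear forms `B w (·, u)` as a function of
`w`. The slices `B w (u, ·)` in the other variable are given by `B.flip u`. -/
def rightSlice (B : W →ₗ[K] BilinForm K V) (u : V) : W →ₗ[K] Dual K V :=
  LinearMap.flip (BilinForm.flipHom.toLinearMap ∘ₗ B) u

theorem rightSlice_apply_apply (B : W →ₗ[K] BilinForm K V) (u : V) (w : W) (y : V) :
    rightSlice B u w y = B w y u :=
  rfl

theorem rightSlice_eq_add (B : W →ₗ[K] BilinForm K V) (u : V) (w : W) :
    rightSlice B u w = B w u + skewPart (B w) u := by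
  ext y
  simp [rightSlice_apply_apply, skewPart_apply_apply]

theorem finrank_inf_ker_eval_add_one [FiniteDimensional K V] {I : Submodule K (Dual K V)}
    {φ : Dual K V} (hφ : φ ∈ I) {u : V} (hu : φ u ≠ 0) :
    finrank K ↥(I ⊓ LinearMap.ker (Dual.eval K V u)) + 1 = finrank K I := by
  have hsurj : I.map (Dual.eval K V u) = ⊤ :=
    (eq_bot_or_eq_top _).resolve_left fun h =>
      hu (by simpa [h] using Submodule.mem_map_of_mem (f := Dual.eval K V u) hφ)
  rw [finrank_eq_finrank_map_add_finrank_inf_ker I (Dual.eval K V u), hsurj, finrank_top,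
    finrank_self, add_comm]

theorem finrank_le_sum_of_finrank_map_rightSlice_le [FiniteDimensional K V]
    [FiniteDimensional K W] (B : W →ₗ[K] BilinForm K V) (c : ℕ → ℕ) {G : Submodule K W}
    {I : Submodule K (Dual K V)} (hI : ∀ w ∈ G, LinearMap.range (B w) ≤ I)
    (hc : ∀ H ≤ G, ∀ J : Submodule K (Dual K V), (∀ w ∈ H, LinearMap.range (B w) ≤ J) →
      ∀ φ ∈ J, ∀ u, φ u ≠ 0 → finrank K (H.map (rightSlice B u)) ≤ c (finrank K J)) :
    finrank K G ≤
      finrank K ↥(G ⊓ LinearMap.ker B) + ∑ i ∈ Finset.range (finrank K I), c (i + 1) := by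
  induction hn : finrank K I generalizing G I with
  | zero =>
    have hG : G ≤ LinearMap.ker B := fun w hw => by
      have hBw := hI w hw
      rwa [Submodule.finrank_eq_zero.1 hn, le_bot_iff, LinearMap.range_eq_bot] at hBw
    rw [inf_eq_left.2 hG]
    exact Nat.le_add_right _ _
  | succ n ih =>
    have hIne : I ≠ ⊥ := by
      rintro rfl
      rw [finrank_bot] at hn
      lia
    obtain ⟨φ, hφ, hφ0⟩ := I.exists_mem_ne_zero_of_ne_bot hIne
    obtain ⟨u, hu⟩ : ∃ u, φ u ≠ 0 := not_forall.1 fun h => hφ0 (LinearMap.ext h)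
    -- If `B w (·, u) = 0`, the range of `B w` lies in the hyperplane `{ψ | ψ u = 0}` of `I`.
    let G' := G ⊓ LinearMap.ker (rightSlice B u)
    have hG' : finrank K G' ≤
        finrank K ↥(G' ⊓ LinearMap.ker B) + ∑ i ∈ Finset.range n, c (i + 1) := by
      have hdim := finrank_inf_ker_eval_add_one hφ hu
      refine ih (I := I ⊓ LinearMap.ker (Dual.eval K V u)) ?_
        (fun H hH => hc H (hH.trans inf_le_left)) (by lia)
      rintro w ⟨hw, hwu⟩ _ ⟨y, rfl⟩
      exact ⟨hI w hw ⟨y, rfl⟩, LinearMap.congr_fun hwu y⟩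
    have himage := hc G le_rfl I hI φ hφ u hu
    have hmono : finrank K ↥(G' ⊓ LinearMap.ker B) ≤ finrank K ↥(G ⊓ LinearMap.ker B) :=
      Submodule.finrank_mono (inf_le_inf_right _ inf_le_left)
    have hsplit : finrank K G = finrank K (G.map (rightSlice B u)) + finrank K G' :=
      finrank_eq_finrank_map_add_finrank_inf_ker G (rightSlice B u)
    rw [hn] at himage
    rw [Finset.sum_range_succ]
    lia

variable [Infinite K] [FiniteDimensional K W]

theorem range_le_map_flip_of_forall_finrank_le {B : W →ₗ[K] BilinForm K V} {F : Submodule K W}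
    {y₀ : V} (hmax : ∀ y, finrank K (F.map (B.flip y)) ≤ finrank K (F.map (B.flip y₀)))
    {w : W} (hw : w ∈ F ⊓ LinearMap.ker (B.flip y₀)) :
    LinearMap.range (B w) ≤ F.map (B.flip y₀) := by
  rintro _ ⟨y, rfl⟩
  exact apply_mem_map_of_forall_finrank_map_le hmax hw.1 hw.2 y

variable [FiniteDimensional K V]

theorem two_mul_finrank_le_of_forall_isAlt (B : W →ₗ[K] BilinForm K V) {F : Submodule K W}
    (hF : ∀ w ∈ F, (B w).IsAlt) {x : ℕ} (hx : ∀ y, finrank K (F.map (B.flip y)) ≤ x) :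
    2 * finrank K F ≤ 2 * finrank K ↥(F ⊓ LinearMap.ker B) + x * (x + 1) := by
  obtain ⟨y₀, hy₀⟩ := exists_forall_finrank_map_le B.flip F
  let m := finrank K (F.map (B.flip y₀))
  let G := F ⊓ LinearMap.ker (B.flip y₀)
  have hG : finrank K G ≤ finrank K ↥(G ⊓ LinearMap.ker B) + ∑ i ∈ Finset.range m, i := by
    refine finrank_le_sum_of_finrank_map_rightSlice_le B (fun i => i - 1)
      (fun w hw => range_le_map_flip_of_forall_finrank_le hy₀ hw) ?_
    intro H hH J hJ φ hφ u hu
    have hle : H.map (rightSlice B u) ≤ J ⊓ LinearMap.ker (Dual.eval K V u) := by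
      rintro _ ⟨w, hw, rfl⟩
      have halt : (B w).IsAlt := hF w (hH hw).1
      have hright : rightSlice B u w = B w (-u) := by
        ext y
        rw [rightSlice_apply_apply, map_neg, LinearMap.neg_apply]
        exact (LinearMap.IsAlt.neg halt u y).symm
      exact ⟨hright ▸ hJ w hw ⟨-u, rfl⟩, halt u⟩
    have hdim := finrank_inf_ker_eval_add_one hφ hu
    have := Submodule.finrank_mono hle
    lia
  have hsum := Finset.sum_range_id_mul_two m
  have hsplit : finrank K F = m + finrank K G :=
    finrank_eq_finrank_map_add_finrank_inf_ker F (B.flip y₀)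
  have hker : finrank K ↥(G ⊓ LinearMap.ker B) ≤ finrank K ↥(F ⊓ LinearMap.ker B) :=
    Submodule.finrank_mono (inf_le_inf_right _ inf_le_left)
  calc 2 * finrank K F
      ≤ 2 * finrank K ↥(F ⊓ LinearMap.ker B) + (2 * m + m * (m - 1)) := by lia
    _ = 2 * finrank K ↥(F ⊓ LinearMap.ker B) + m * (m + 1) := by
      cases m with
      | zero => rfl
      | succ n =>
        rw [Nat.add_sub_cancel]
        ring
    _ ≤ 2 * finrank K ↥(F ⊓ LinearMap.ker B) + x * (x + 1) := by gcongr; exacts [hx y₀, hx y₀]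

theorem finrank_inf_ker_flip_inf_ker_skewPart_le (B : W →ₗ[K] BilinForm K V)
    {F : Submodule K W} {y₀ : V} {q : ℕ}
    (hmax : ∀ y, finrank K (F.map (B.flip y)) ≤ finrank K (F.map (B.flip y₀)))
    (hq : ∀ y, finrank K (F.map ((skewPart ∘ₗ B).flip y)) ≤ q)
    {w₀ : W} (hw₀ : w₀ ∈ F) (hy₀ : B w₀ y₀ y₀ ≠ 0) :
    finrank K ↥(F ⊓ LinearMap.ker (B.flip y₀) ⊓ LinearMap.ker ((skewPart ∘ₗ B).flip y₀)) ≤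
      finrank K ↥(F ⊓ LinearMap.ker B) +
        ∑ i ∈ Finset.range (finrank K (F.map (B.flip y₀)) - 1), (i + 1 + q) := by
  set G := F ⊓ LinearMap.ker (B.flip y₀) ⊓ LinearMap.ker ((skewPart ∘ₗ B).flip y₀)
  set I := F.map (B.flip y₀) ⊓ LinearMap.ker (Dual.eval K V y₀)
  have hI : finrank K (F.map (B.flip y₀)) - 1 = finrank K I :=
    Nat.sub_eq_of_eq_add
      (finrank_inf_ker_eval_add_one (Submodule.mem_map_of_mem hw₀) hy₀).symm
  have hGI : ∀ w ∈ G, LinearMap.range (B w) ≤ I := by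
    rintro w ⟨hw, hskew⟩ _ ⟨y, rfl⟩
    refine ⟨range_le_map_flip_of_forall_finrank_le hmax hw ⟨y, rfl⟩, ?_⟩
    have hleft : B w y₀ y = 0 := LinearMap.congr_fun hw.2 y
    have hdiff : B w y y₀ - B w y₀ y = 0 := LinearMap.congr_fun hskew y
    exact (sub_eq_zero.1 hdiff).trans hleft
  have hker : finrank K ↥(G ⊓ LinearMap.ker B) ≤ finrank K ↥(F ⊓ LinearMap.ker B) :=
    Submodule.finrank_mono (inf_le_inf_right _ (inf_le_left.trans inf_le_left))
  rw [hI]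
  refine (finrank_le_sum_of_finrank_map_rightSlice_le B (· + q) hGI ?_).trans (by gcongr)
  intro H hH J hJ _ _ u _
  have hle : H.map (rightSlice B u) ≤ J ⊔ F.map ((skewPart ∘ₗ B).flip u) := by
    rintro _ ⟨w, hw, rfl⟩
    rw [rightSlice_eq_add]
    exact Submodule.add_mem_sup (hJ w hw ⟨u, rfl⟩) ⟨w, (hH hw).1.1, rfl⟩
  calc finrank K (H.map (rightSlice B u))
      ≤ finrank K ↥(J ⊔ F.map ((skewPart ∘ₗ B).flip u)) := Submodule.finrank_mono hle
    _ ≤ finrank K J + finrank K (F.map ((skewPart ∘ₗ B).flip u)) :=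
      Submodule.finrank_add_le_finrank_add_finrank _ _
    _ ≤ finrank K J + q := by gcongr; exact hq u

theorem two_mul_finrank_le_of_finrank_map_flip_le (B : W →ₗ[K] BilinForm K V)
    {F : Submodule K W} {x q : ℕ} (hx : ∀ y, finrank K (F.map (B.flip y)) ≤ x)
    (hq : ∀ y, finrank K (F.map ((skewPart ∘ₗ B).flip y)) ≤ q) :
    2 * finrank K F ≤ 2 * finrank K ↥(F ⊓ LinearMap.ker B) + x * (x + 1) + 2 * (x * q) := by
  by_cases hF : ∀ w ∈ F, (B w).IsAlt
  · exact (two_mul_finrank_le_of_forall_isAlt B hF hx).trans (Nat.le_add_right _ _)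
  push Not at hF
  obtain ⟨w₀, hw₀, hw₀alt⟩ := hF
  obtain ⟨y₀, hmax, hy₀⟩ :=
    exists_forall_finrank_map_le_and_apply_self_ne_zero B.flip F hw₀alt
  have hker := finrank_inf_ker_flip_inf_ker_skewPart_le B hmax hq hw₀ hy₀
  have hsplit := finrank_eq_finrank_map_add_finrank_inf_ker F (B.flip y₀)
  have hsplit' := finrank_eq_finrank_map_add_finrank_inf_ker (F ⊓ LinearMap.ker (B.flip y₀))
    ((skewPart ∘ₗ B).flip y₀)
  have hslice : finrank K ((F ⊓ LinearMap.ker (B.flip y₀)).map ((skewPart ∘ₗ B).flip y₀)) ≤ q :=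
    (Submodule.finrank_mono (Submodule.map_mono inf_le_left)).trans (hq y₀)
  have hpos : 0 < finrank K (F.map (B.flip y₀)) := by
    have := finrank_inf_ker_eval_add_one (φ := B w₀ y₀) (I := F.map (B.flip y₀))
      (Submodule.mem_map_of_mem hw₀) hy₀
    lia
  have hm := hx y₀
  generalize finrank K (F.map (B.flip y₀)) = m at *
  obtain ⟨n, rfl⟩ := Nat.exists_eq_add_one.2 hpos
  have hsum : 2 * ∑ i ∈ Finset.range n, (i + 1 + q) = n * (n + 1) + 2 * (n * q) := by
    have := Finset.sum_range_id_mul_two (n + 1)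
    rw [Finset.sum_range_succ'] at this
    rw [Finset.sum_add_distrib, Finset.sum_const, Finset.card_range, smul_eq_mul]
    lia
  have hmono : (n + 1) * (n + 1 + 1) + 2 * ((n + 1) * q) ≤ x * (x + 1) + 2 * (x * q) := by
    gcongr
  lia

end FamiliesOfBilinForms

section SymplecticLieAlgebras

open LieAlgebra (ad center derivedSeries)
open LinearMap (BilinForm)

variable {K g : Type*} [Field K] [LieRing g] [LieAlgebra K g]

/-- A symplectic form on a Lie algebra over a field, as a bundled bilinear form: alternating,
nondegenerate and closed. -/
structure IsSymplecticBilinForm (ω : BilinForm K g) : Prop where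
  isAlt : ω.IsAlt
  nondegenerate : ω.Nondegenerate
  closed : ∀ X Y Z : g, ω ⁅X, Y⁆ Z + ω ⁅Y, Z⁆ X + ω ⁅Z, X⁆ Y = 0

/-- The linear family of bilinear forms `(Y, U) ↦ ω(⁅W, Y⁆, U)`, indexed by `W`. -/
def bracketForm (ω : BilinForm K g) : g →ₗ[K] BilinForm K g :=
  LinearMap.compr₂ (ad K g : g →ₗ[K] Module.End K g) ω

theorem bracketForm_apply_apply (ω : BilinForm K g) (W Y U : g) :
    bracketForm ω W Y U = ω ⁅W, Y⁆ U :=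
  rfl

/-- The subspace of all `W` with `ω(⁅X, Y⁆, W) = 0` for every `Y`. -/
def adPerp (ω : BilinForm K g) (X : g) : Submodule K g :=
  ω.orthogonal (LinearMap.range (ad K g X))

/-- The part of the centralizer of `X` that is `ω`-orthogonal to the image of `ad X`. -/
def centralizerAdPerp (ω : BilinForm K g) (X : g) : Submodule K g :=
  LinearMap.ker (ad K g X) ⊓ adPerp ω X

/-- The rank of `ad X` is maximal among all adjoint operators. -/
def IsAdRankMaximal (K : Type*) {g : Type*} [Field K] [LieRing g] [LieAlgebra K g] (X : g) :
    Prop :=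
  ∀ Y : g, finrank K (LinearMap.range (ad K g Y)) ≤ finrank K (LinearMap.range (ad K g X))

theorem isAdRankMaximal_iff_finrank_map_top_le {X : g} :
    IsAdRankMaximal K X ↔
      ∀ Y, finrank K ((⊤ : Submodule K g).map ((ad K g : g →ₗ[K] Module.End K g) Y)) ≤
        finrank K ((⊤ : Submodule K g).map ((ad K g : g →ₗ[K] Module.End K g) X)) := by
  refine forall_congr' fun Y => ?_
  rw [LinearMap.range_eq_map, LinearMap.range_eq_map]
  rfl

theorem IsAdRankMaximal.lie_mem_range_ad [Infinite K] [FiniteDimensional K g] {X W : g}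
    (hX : IsAdRankMaximal K X) (hW : ⁅X, W⁆ = 0) (Y : g) : ⁅Y, W⁆ ∈ LinearMap.range (ad K g X) := by
  rw [← Submodule.map_top]
  exact apply_mem_map_of_forall_finrank_map_le (M := (ad K g : g →ₗ[K] Module.End K g))
    (isAdRankMaximal_iff_finrank_map_top_le.1 hX) (Submodule.mem_top (x := W)) hW Y

theorem finrank_dualAnnihilator_comap_add {V : Type*} [AddCommGroup V] [Module K V]
    [FiniteDimensional K V] (f : V →ₗ[K] V) (A : Submodule K V) :
    finrank K (A.comap f).dualAnnihilator + finrank K ↥(LinearMap.range f ⊓ A) =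
      finrank K (LinearMap.range f) := by
  have hann := Subspace.finrank_add_finrank_dualAnnihilator_eq (A.comap f)
  have hrank := LinearMap.finrank_range_add_finrank_ker f
  have hcomap := finrank_eq_finrank_map_add_finrank_inf_ker (A.comap f) f
  rw [Submodule.map_comap_eq, inf_eq_right.2 (LinearMap.ker_le_comap f)] at hcomap
  lia

namespace IsSymplecticBilinForm

variable {ω : BilinForm K g}

theorem skewPart_bracketForm_apply_apply (hω : IsSymplecticBilinForm ω) (W Y U : g) :
    skewPart (bracketForm ω W) Y U = ω ⁅Y, U⁆ W := by
  have hclosed := hω.closed Y U W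
  rw [← lie_skew U W, map_neg, LinearMap.neg_apply] at hclosed
  rw [skewPart_apply_apply, bracketForm_apply_apply, bracketForm_apply_apply]
  linear_combination -hclosed

theorem exists_not_isAlt_bracketForm (hω : IsSymplecticBilinForm ω) (h3 : (3 : K) ≠ 0)
    (hne : ∃ X Y : g, ⁅X, Y⁆ ≠ 0) : ∃ Y, ¬(bracketForm ω Y).IsAlt := by
  by_contra! halt
  obtain ⟨X, Y, hXY⟩ := hne
  refine hXY (hω.nondegenerate.1 _ fun Z => ?_)
  -- Now `ω(⁅X, Y⁆, Z)` is totally skew, so its three cyclic permutations agree.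
  have hswap (X Y Z : g) : ω ⁅X, Y⁆ Z = -ω ⁅X, Z⁆ Y :=
    (LinearMap.IsAlt.neg (halt X) Z Y).symm
  have hskew (X Y Z : g) : ω ⁅X, Y⁆ Z = -ω ⁅Y, X⁆ Z := by
    rw [← lie_skew, map_neg, LinearMap.neg_apply]
  have hclosed : 3 * ω ⁅X, Y⁆ Z = 0 := by
    linear_combination hω.closed X Y Z + hskew X Y Z - hswap Y Z X + hswap X Y Z - hskew Z X Y
  exact (mul_eq_zero.1 hclosed).resolve_left h3

theorem ker_bracketForm (hω : IsSymplecticBilinForm ω) :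
    LinearMap.ker (bracketForm ω) = (center K g).toSubmodule := by
  ext z
  rw [LieSubmodule.mem_toSubmodule, LieModule.mem_maxTrivSubmodule]
  constructor
  · intro hz Y
    refine hω.nondegenerate.1 _ fun U => ?_
    rw [← lie_skew, map_neg, LinearMap.neg_apply, ← bracketForm_apply_apply,
      LinearMap.mem_ker.1 hz, LinearMap.zero_apply, LinearMap.zero_apply, neg_zero]
  · intro hz
    ext Y U
    rw [bracketForm_apply_apply, ← lie_skew, hz, neg_zero, map_zero]
    rfl

theorem ker_skewPart_comp_bracketForm (hω : IsSymplecticBilinForm ω) :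
    LinearMap.ker (skewPart ∘ₗ bracketForm ω) =
      ω.orthogonal (derivedSeries K g 1).toSubmodule := by
  ext z
  have horth : z ∈ ω.orthogonal (derivedSeries K g 1).toSubmodule ↔
      Submodule.span K {U | ∃ Y Z : g, ⁅Y, Z⁆ = U} ≤ LinearMap.ker (ω.flip z) := by
    rw [← LieAlgebra.coe_derivedSeries_one_eq K g]
    rfl
  rw [horth, Submodule.span_le]
  constructor
  · rintro hz _ ⟨Y, U, rfl⟩
    have hzYU := LinearMap.congr_fun (LinearMap.congr_fun hz Y) U
    exact (hω.skewPart_bracketForm_apply_apply z Y U).symm.trans hzYU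
  · intro hz
    ext Y U
    exact (hω.skewPart_bracketForm_apply_apply z Y U).trans (hz ⟨Y, U, rfl⟩)

variable [FiniteDimensional K g]

theorem finrank_adPerp_add_finrank_range_ad (hω : IsSymplecticBilinForm ω) (X : g) :
    finrank K (adPerp ω X) + finrank K (LinearMap.range (ad K g X)) = finrank K g := by
  rw [adPerp, BilinForm.finrank_orthogonal hω.nondegenerate]
  exact Nat.sub_add_cancel (Submodule.finrank_le _)

theorem finrank_le_two_mul_finrank_range_ad_add (hω : IsSymplecticBilinForm ω) (X : g) :
    finrank K g ≤
      2 * finrank K (LinearMap.range (ad K g X)) + finrank K (centralizerAdPerp ω X) := by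
  have hsup : finrank K ↥(LinearMap.ker (ad K g X) ⊔ adPerp ω X) +
      finrank K (centralizerAdPerp ω X) = _ :=
    Submodule.finrank_sup_add_finrank_inf_eq (LinearMap.ker (ad K g X)) (adPerp ω X)
  have hle := Submodule.finrank_le (LinearMap.ker (ad K g X) ⊔ adPerp ω X)
  have hrank := LinearMap.finrank_range_add_finrank_ker (ad K g X)
  have hperp := hω.finrank_adPerp_add_finrank_range_ad X
  lia

theorem finrank_map_skew_slice_add_le (hω : IsSymplecticBilinForm ω) (X Y : g) :
    finrank K ((adPerp ω X).map ((skewPart ∘ₗ bracketForm ω).flip Y)) +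
        finrank K ↥(LinearMap.range (ad K g Y) ⊓ LinearMap.range (ad K g X)) ≤
      finrank K (LinearMap.range (ad K g Y)) := by
  rw [← finrank_dualAnnihilator_comap_add (ad K g Y)]
  gcongr
  refine Submodule.finrank_mono ?_
  rintro _ ⟨W, hW, rfl⟩
  refine (Submodule.mem_dualAnnihilator _).2 fun U hU => ?_
  exact (hω.skewPart_bracketForm_apply_apply W Y U).trans (hW _ hU)

theorem finrank_map_slice_lt [Infinite K] (hω : IsSymplecticBilinForm ω) {X Y : g}
    (hX : IsAdRankMaximal K X) (hY : ω ⁅Y, X⁆ X ≠ 0) :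
    finrank K ((centralizerAdPerp ω X).map ((bracketForm ω).flip Y)) <
      finrank K ↥(LinearMap.range (ad K g Y) ⊓ LinearMap.range (ad K g X)) := by
  set N := LinearMap.range (ad K g Y) ⊓ LinearMap.range (ad K g X)
  have hmap : (centralizerAdPerp ω X).map ((bracketForm ω).flip Y) ≤
      (N ⊓ LinearMap.ker (ω.flip X)).map ω := by
    rintro _ ⟨W, ⟨hWX, hWperp⟩, rfl⟩
    have hXW : ⁅X, W⁆ = 0 := hWX
    have hvanish : ω ⁅Y, W⁆ X = 0 := by
      have hclosed := hω.closed X Y W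
      rw [← lie_skew W X, hXW, neg_zero, map_zero, LinearMap.zero_apply, add_zero] at hclosed
      have hperp : ω ⁅X, Y⁆ W = 0 := hWperp _ ⟨Y, rfl⟩
      rwa [hperp, zero_add] at hclosed
    refine ⟨⁅W, Y⁆, ?_, rfl⟩
    rw [← lie_skew]
    exact neg_mem ⟨⟨⟨W, rfl⟩, hX.lie_mem_range_ad hXW Y⟩, hvanish⟩
  have hlt : N ⊓ LinearMap.ker (ω.flip X) < N :=
    inf_lt_left.2 fun hle =>
      hY (hle ⟨⟨X, rfl⟩, hX.lie_mem_range_ad (lie_self X) Y⟩)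
  calc finrank K ((centralizerAdPerp ω X).map ((bracketForm ω).flip Y))
      ≤ finrank K ((N ⊓ LinearMap.ker (ω.flip X)).map ω) := Submodule.finrank_mono hmap
    _ ≤ finrank K ↥(N ⊓ LinearMap.ker (ω.flip X)) := Submodule.finrank_map_le _ _
    _ < finrank K N := Submodule.finrank_lt_finrank_of_lt hlt

theorem exists_slice_finrank_bounds [Infinite K] (hω : IsSymplecticBilinForm ω) {X Y₀ : g}
    (hX : IsAdRankMaximal K X) (hY₀ : ω ⁅Y₀, X⁆ X ≠ 0) :
    ∃ x q, (∀ Y, finrank K ((centralizerAdPerp ω X).map ((bracketForm ω).flip Y)) ≤ x) ∧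
      (∀ Y, finrank K ((adPerp ω X).map ((skewPart ∘ₗ bracketForm ω).flip Y)) ≤ q) ∧
      x + q < finrank K (LinearMap.range (ad K g X)) := by
  obtain ⟨Y₁, hY₁⟩ := exists_forall_finrank_map_le (bracketForm ω).flip (centralizerAdPerp ω X)
  obtain ⟨Y₂, hY₂⟩ := exists_forall_finrank_map_le (skewPart ∘ₗ bracketForm ω).flip (adPerp ω X)
  refine ⟨_, _, hY₁, hY₂, ?_⟩
  have hopen := isLineOpen_apply_ne_zero (((bracketForm ω).flip X).flip X)
  have hopen₁ := isLineOpen_le_finrank_map (bracketForm ω).flip (centralizerAdPerp ω X)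
    (finrank K ((centralizerAdPerp ω X).map ((bracketForm ω).flip Y₁)))
  have hopen₂ := isLineOpen_le_finrank_map (skewPart ∘ₗ bracketForm ω).flip (adPerp ω X)
    (finrank K ((adPerp ω X).map ((skewPart ∘ₗ bracketForm ω).flip Y₂)))
  obtain ⟨Y, hY, hx, hq⟩ := hopen.inter_nonempty (hopen₁.inter hopen₂) ⟨Y₀, hY₀⟩
    (hopen₁.inter_nonempty hopen₂ ⟨Y₁, hY₁ Y₁⟩ ⟨Y₂, hY₂ Y₂⟩)
  calc _ ≤ _ := add_le_add hx hq
    _ < finrank K ↥(LinearMap.range (ad K g Y) ⊓ LinearMap.range (ad K g X)) + _ := by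
      gcongr
      exact hω.finrank_map_slice_lt hX hY
    _ ≤ finrank K (LinearMap.range (ad K g Y)) :=
      (add_comm _ _).trans_le (hω.finrank_map_skew_slice_add_le X Y)
    _ ≤ finrank K (LinearMap.range (ad K g X)) := hX Y

theorem two_mul_finrank_le [Infinite K] (hω : IsSymplecticBilinForm ω)
    (hZ : center K g ≤ derivedSeries K g 1) {X Y : g} (hX : IsAdRankMaximal K X)
    (hY : ω ⁅Y, X⁆ X ≠ 0) :
    2 * finrank K g ≤ finrank K (LinearMap.range (ad K g X)) *
      (finrank K (LinearMap.range (ad K g X)) + 5) := by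
  obtain ⟨x, q, hx, hq, hxq⟩ := hω.exists_slice_finrank_bounds hX hY
  have hF := hω.finrank_le_two_mul_finrank_range_ad_add X
  have hP := hω.finrank_adPerp_add_finrank_range_ad X
  have hFbound := two_mul_finrank_le_of_finrank_map_flip_le (bracketForm ω) hx fun Y =>
    (Submodule.finrank_mono (Submodule.map_mono inf_le_right)).trans (hq Y)
  have hPbound := two_mul_finrank_le_of_forall_isAlt (skewPart ∘ₗ bracketForm ω)
    (fun W _ => skewPart_isAlt (bracketForm ω W)) hq
  have hcenter : finrank K ↥(centralizerAdPerp ω X ⊓ LinearMap.ker (bracketForm ω)) ≤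
      finrank K (derivedSeries K g 1).toSubmodule := by
    rw [hω.ker_bracketForm]
    exact Submodule.finrank_mono (inf_le_right.trans hZ)
  have horth : finrank K ↥(adPerp ω X ⊓ LinearMap.ker (skewPart ∘ₗ bracketForm ω)) +
      finrank K (derivedSeries K g 1).toSubmodule ≤ finrank K g := by
    rw [hω.ker_skewPart_comp_bracketForm]
    refine (Nat.add_le_add_right (Submodule.finrank_mono inf_le_right) _).trans_eq ?_
    rw [BilinForm.finrank_orthogonal hω.nondegenerate]
    exact Nat.sub_add_cancel (Submodule.finrank_le _)
  generalize finrank K (LinearMap.range (ad K g X)) = r at *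
  have hsq : (x + q) * (x + q + 1) ≤ (r - 1) * r := by
    gcongr <;> lia
  obtain ⟨n, rfl⟩ := Nat.exists_eq_add_one.2 (Nat.zero_lt_of_lt hxq)
  rw [Nat.add_sub_cancel] at hsq
  lia

end IsSymplecticBilinForm

theorem finrank_le_of_charSeqTwos_symplectic_indecomposable_general [Infinite K]
    [FiniteDimensional K g] (h3 : (3 : K) ≠ 0) {ω : BilinForm K g}
    (hω : IsSymplecticBilinForm ω) (hZ : center K g ≤ derivedSeries K g 1) {k : ℕ}
    (hk : ∀ X : g, finrank K (LinearMap.range (ad K g X)) ≤ k) :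
    finrank K g ≤ k * (k + 5) / 2 := by
  rw [Nat.le_div_iff_mul_le two_pos, mul_comm]
  by_cases hne : ∃ X Y : g, ⁅X, Y⁆ ≠ 0
  · obtain ⟨Y, hYalt⟩ := hω.exists_not_isAlt_bracketForm h3 hne
    obtain ⟨X, hmax, hX⟩ := exists_forall_finrank_map_le_and_apply_self_ne_zero
      (ad K g : g →ₗ[K] Module.End K g) ⊤ hYalt
    refine (hω.two_mul_finrank_le hZ (isAdRankMaximal_iff_finrank_map_top_le.2 hmax) hX).trans ?_
    gcongr <;> exact hk X
  · push Not at hne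
    have habelian : IsLieAbelian g := ⟨hne⟩
    have hcenter : center K g = ⊤ :=
      (LieAlgebra.isLieAbelian_iff_center_eq_top (R := K) (L := g)).1 habelian
    have hderived : derivedSeries K g 1 = ⊥ :=
      (LieAlgebra.abelian_iff_derived_one_eq_bot _).1
        ((lie_abelian_iff_equiv_lie_abelian LieIdeal.topEquiv).2 habelian)
    rw [hcenter, hderived] at hZ
    have htop : (⊤ : Submodule K g) = ⊥ := le_bot_iff.1 hZ
    rw [← finrank_top K g, htop, finrank_bot]
    exact Nat.zero_le _

end SymplecticLieAlgebras

theorem center_le_derivedSeries_of_indecomposable {K g : Type*} [Field K] [LieRing g]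
    [LieAlgebra K g] (hne : ∃ X Y : g, ⁅X, Y⁆ ≠ 0)
    (hind : ¬∃ I J : LieIdeal K g, I ≠ ⊥ ∧ J ≠ ⊥ ∧ I ⊓ J = ⊥ ∧ I ⊔ J = ⊤) :
    LieAlgebra.center K g ≤ LieAlgebra.derivedSeries K g 1 := by
  intro z hz
  by_contra hzD
  have hcentral : ∀ X : g, ⁅X, z⁆ = 0 := (LieModule.mem_maxTrivSubmodule K g g z).1 hz
  have hlieD (X Y : g) : ⁅X, Y⁆ ∈ LieAlgebra.derivedSeries K g 1 :=
    LieSubmodule.lie_mem_lie (LieSubmodule.mem_top X) (LieSubmodule.mem_top Y)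
  obtain ⟨C, hDC, hC⟩ := (Submodule.disjoint_span_singleton_of_notMem hzD).exists_isCompl
  obtain ⟨I, hI⟩ := (Submodule.exists_lieSubmodule_coe_eq_iff g (p := K ∙ z)).2 fun X W hW => by
    obtain ⟨a, rfl⟩ := Submodule.mem_span_singleton.1 hW
    rw [lie_smul, hcentral, smul_zero]
    exact zero_mem _
  obtain ⟨J, hJ⟩ := (Submodule.exists_lieSubmodule_coe_eq_iff g (p := C)).2
    fun X W _ => hDC (hlieD X W)
  rw [← hI, ← hJ, LieSubmodule.isCompl_toSubmodule] at hC
  refine hind ⟨I, J, ?_, ?_, hC.symm.inf_eq_bot, hC.symm.sup_eq_top⟩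
  · rintro rfl
    have hz0 : z ∈ (⊥ : LieIdeal K g) := by
      rw [← LieSubmodule.mem_toSubmodule, hI]
      exact Submodule.mem_span_singleton_self z
    exact hzD ((LieSubmodule.mem_bot z).1 hz0 ▸ zero_mem _)
  · rintro rfl
    obtain ⟨X, Y, hXY⟩ := hne
    have hXY0 : ⁅X, Y⁆ ∈ (⊥ : LieIdeal K g) := by
      rw [← LieSubmodule.mem_toSubmodule, hJ]
      exact hDC (hlieD X Y)
    exact hXY ((LieSubmodule.mem_bot _).1 hXY0)

theorem HasCharSeqTwos.finrank_range_ad_le {K g : Type*} [RCLike K] [LieRing g]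
    [LieAlgebra K g] {k : ℕ} (hc : HasCharSeqTwos K g k) (hnil : ∀ X Y Z : g, ⁅⁅X, Y⁆, Z⁆ = 0)
    (X : g) : Module.finrank K (LinearMap.range (LieAlgebra.ad K g X)) ≤ k := by
  by_cases hX : X ∈ LieAlgebra.derivedSeries K g 1
  · have hDker : Submodule.span K {W | ∃ Y Z : g, ⁅Y, Z⁆ = W} ≤
        LinearMap.ker (LieAlgebra.ad K g : g →ₗ[K] Module.End K g) := by
      rw [Submodule.span_le]
      rintro _ ⟨Y, Z, rfl⟩
      exact LinearMap.ext fun U => hnil Y Z U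
    rw [← LieAlgebra.coe_derivedSeries_one_eq] at hDker
    have had : LieAlgebra.ad K g X = 0 := hDker hX
    rw [had, LinearMap.range_zero, finrank_bot]
    exact Nat.zero_le k
  · exact hc.1 X hX

theorem IsSymplecticForm.exists_isSymplecticBilinForm {K g : Type*} [RCLike K] [LieRing g]
    [LieAlgebra K g] {θ : g → g → K} (hθ : IsSymplecticForm K g θ) :
    ∃ ω : LinearMap.BilinForm K g, IsSymplecticBilinForm ω := by
  obtain ⟨hleft, hright, halt, hnondeg, hclosed⟩ := hθ
  have hzero_left (Z : g) : θ 0 Z = 0 := by simpa using hleft 1 0 0 Z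
  have hzero_right (Z : g) : θ Z 0 = 0 := by simpa using hright 1 Z 0 0
  let ω : LinearMap.BilinForm K g := LinearMap.mk₂ K θ
    (fun X Y Z => by simpa using hleft 1 X Y Z)
    (fun a X Z => by simpa [hzero_left] using hleft a X 0 Z)
    (fun X Y Z => by simpa using hright 1 X Y Z)
    (fun a X Y => by simpa [hzero_right] using hright a X Y 0)
  have hω : ω.IsAlt := halt
  exact ⟨ω, hω, hω.isRefl.nondegenerate_iff_separatingLeft.2 hnondeg, hclosed⟩

/-- If `g` is a 2-step nilpotent symplectic Lie algebra over `K` with characteristic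
sequence `(2,…,2,1,…,1)` containing exactly `k` twos, and `g` is indecomposable (not the
direct sum of two nonzero ideals), then `dim g ≤ k(k+5)/2`. -/
theorem finrank_le_of_charSeqTwos_symplectic_indecomposable
    (K : Type*) [RCLike K] (g : Type*) [LieRing g] [LieAlgebra K g] [FiniteDimensional K g]
    (k : ℕ) (h2 : IsTwoStepNilpotent g) (hc : HasCharSeqTwos K g k)
    (θ : g → g → K) (hθ : IsSymplecticForm K g θ)
    (hind : ¬ ∃ I J : LieIdeal K g, I ≠ ⊥ ∧ J ≠ ⊥ ∧ I ⊓ J = ⊥ ∧ I ⊔ J = ⊤) :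
    Module.finrank K g ≤ k * (k + 5) / 2 := by
  obtain ⟨ω, hω⟩ := hθ.exists_isSymplecticBilinForm
  exact finrank_le_of_charSeqTwos_symplectic_indecomposable_general three_ne_zero hω
    (center_le_derivedSeries_of_indecomposable h2.2 hind)
    (hc.finrank_range_ad_le h2.1)
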